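/- The real polynomial Bohnenblust–Hille constants satisfy limsup_{m→∞} D_{ℝ,m}^{1/m} = 2. -/

import Mathlib

open MvPolynomial Filter

/-- The sup norm of a real polynomial in `n` variables over the cube `[-1,1]^n`. -/
noncomputable def supNorm {n : ℕ} (P : MvPolynomial (Fin n) ℝ) : ℝ :=
  sSup {y : ℝ | ∃ x : Fin n → ℝ, (∀ i, |x i| ≤ 1) ∧ y = |eval x P|}

/-- The `ℓ_p` norm of the coefficients of a real polynomial. -/
noncomputable def lpNorm {n : ℕ} (p : ℝ) (P : MvPolynomial (Fin n) ℝ) : ℝ :=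
  (∑ α ∈ P.support, |coeff α P| ^ p) ^ (1 / p)

/-- The real polynomial Bohnenblust–Hille constant `D_{ℝ,m}`. -/
noncomputable def BHconst (m : ℕ) : ℝ :=
  sInf {D : ℝ | 0 < D ∧ ∀ (n : ℕ) (P : MvPolynomial (Fin n) ℝ),
    P.IsHomogeneous m → lpNorm (2 * m / (m + 1)) P ≤ D * supNorm P}

/-- The real polynomial Bohnenblust–Hille constant `D_{ℝ,m}(n)` in a fixed number `n`
of variables. -/
noncomputable def BHconstN (m n : ℕ) : ℝ :=
  sInf {D : ℝ | 0 < D ∧ ∀ P : MvPolynomial (Fin n) ℝ,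
    P.IsHomogeneous m → lpNorm (2 * m / (m + 1)) P ≤ D * supNorm P}

open scoped NNReal in
theorem bh_holder {X T : Type*} (s : Finset T) (t : Finset X) (f : T → X → ℝ≥0) (w : T → ℝ)
    (hw : ∀ i ∈ s, 0 ≤ w i) (hw1 : ∑ i ∈ s, w i = 1) :
    ∑ x ∈ t, ∏ i ∈ s, f i x ^ w i ≤ ∏ i ∈ s, (∑ x ∈ t, f i x) ^ w i := by
  classical
  by_cases h0 : ∃ i ∈ s, w i ≠ 0 ∧ ∑ x ∈ t, f i x = 0
  · obtain ⟨i, hi, hwi, hz⟩ := h0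
    have hz' : ∀ x ∈ t, f i x = 0 := by
      intro x hx
      exact (Finset.sum_eq_zero_iff.mp hz) x hx
    have : ∑ x ∈ t, ∏ i ∈ s, f i x ^ w i = 0 := by
      apply Finset.sum_eq_zero
      intro x hx
      apply Finset.prod_eq_zero hi
      rw [hz' x hx, NNReal.zero_rpow hwi]
    rw [this]; exact zero_le
  · push Not at h0
    have key : ∀ x ∈ t, ∏ i ∈ s, f i x ^ w i ≤
        (∏ i ∈ s, (∑ y ∈ t, f i y) ^ w i) *
          ∑ i ∈ s, (w i).toNNReal * (f i x / ∑ y ∈ t, f i y) := by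
      intro x hx
      have h1 : ∏ i ∈ s, f i x ^ w i =
        (∏ i ∈ s, (∑ y ∈ t, f i y) ^ w i) * ∏ i ∈ s, (f i x / ∑ y ∈ t, f i y) ^ ((w i).toNNReal : ℝ) := by
        rw [← Finset.prod_mul_distrib]
        apply Finset.prod_congr rfl
        intro i hi
        rw [Real.coe_toNNReal _ (hw i hi), ← NNReal.mul_rpow]
        by_cases hwi : w i = 0
        · simp [hwi]
        · rw [mul_div_cancel₀ _ (h0 i hi hwi)]
      rw [h1]
      gcongr
      apply NNReal.geom_mean_le_arith_mean_weighted
      apply NNReal.eq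
      push_cast
      rw [← hw1]
      exact Finset.sum_congr rfl fun i hi => Real.coe_toNNReal _ (hw i hi)
    refine (Finset.sum_le_sum key).trans ?_
    rw [← Finset.mul_sum]
    conv_rhs => rw [← mul_one (∏ i ∈ s, (∑ x ∈ t, f i x) ^ w i)]
    gcongr
    rw [Finset.sum_comm]
    have : ∑ i ∈ s, (w i).toNNReal = 1 := by
      apply NNReal.eq
      push_cast
      rw [← hw1]
      exact Finset.sum_congr rfl fun i hi => Real.coe_toNNReal _ (hw i hi)
    rw [← this]
    apply Finset.sum_le_sum
    intro i hi
    rw [← Finset.mul_sum, ← Finset.sum_div]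
    exact mul_le_of_le_one_right' (div_self_le_one _)

open scoped NNReal in
theorem bh_minkowski {X U : Type*} (t : Finset X) (s : Finset U) (g : U → X → ℝ≥0) {r : ℝ}
    (hr : 1 ≤ r) :
    (∑ x ∈ t, (∑ u ∈ s, g u x) ^ r) ^ (1 / r) ≤ ∑ u ∈ s, (∑ x ∈ t, g u x ^ r) ^ (1 / r) := by
  classical
  induction s using Finset.induction_on with
  | empty =>
    simp [show r ≠ 0 by linarith]
  | insert a s ha ih =>
    simp only [Finset.sum_insert ha]
    exact (NNReal.Lp_add_le t _ _ hr).trans (by gcongr)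

open scoped NNReal in
/-- Blei type inequality. -/
theorem bh_blei {ι T U : Type} [Fintype ι] [Fintype T] [Fintype U] [DecidableEq U]
    (p q : ℝ) (hp : 1 ≤ p) (hp2 : p ≤ 2) (hq : 0 < q) (θ : T → ℝ) (hθ : ∀ t, 0 ≤ θ t)
    (hθ1 : ∑ t, θ t = 1) (m : ℕ) :
    ∀ (S : T → Fin m → Prop) [∀ t c, Decidable (S t c)]
    (_hS : ∀ c, ∑ t, q * θ t / (if S t c then p else 2) = 1)
    (π : T → (Fin m → ι) → U)
    (_hπ : ∀ t c, S t c → ∀ i j, π t i = π t j → i c = j c)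
    (F : (Fin m → ι) → ℝ≥0),
    ∑ i, F i ^ q ≤ ∏ t, (∑ u, (∑ i, if π t i = u then F i ^ 2 else 0) ^ (p / 2)) ^ (q * θ t / p) := by
  induction m with
  | zero =>
    intro S _ hS π hπ F
    have hp0 : p ≠ 0 := by linarith
    simp only [Finset.univ_unique, Finset.sum_singleton]
    have h1 : ∀ t, (∑ u, (if π t default = u then F default ^ 2 else 0 : ℝ≥0) ^ (p / 2)) ^ (q * θ t / p)
        = F default ^ (q * θ t) := by
      intro t
      rw [Finset.sum_eq_single (π t default)]
      · simp only [if_true]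
        rw [← NNReal.rpow_natCast, ← NNReal.rpow_mul, ← NNReal.rpow_mul]
        congr 1
        push_cast
        field_simp
      · intro b _ hb
        rw [if_neg (Ne.symm hb), NNReal.zero_rpow (by linarith)]
      · simp
    simp only [h1]
    by_cases hF : F default = 0
    · rw [hF, NNReal.zero_rpow hq.ne']; exact zero_le
    · have hF' : (0 : ℝ) < F default := NNReal.coe_pos.mpr (pos_iff_ne_zero.mpr hF)
      apply le_of_eq
      apply NNReal.eq
      push_cast
      rw [← Real.rpow_sum_of_pos hF', ← Finset.mul_sum, hθ1, mul_one]
  | succ m ih =>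
    intro S _ hS π hπ F
    set h : T → ι → U → ℝ≥0 := fun t x u =>
      ∑ i : Fin m → ι, if π t (Fin.cons x i) = u then F (Fin.cons x i) ^ 2 else 0 with hh
    have hsplit : ∀ (f : (Fin (m+1) → ι) → ℝ≥0), ∑ i, f i = ∑ x, ∑ i, f (Fin.cons x i) := by
      intro f
      rw [← (Fin.consEquiv (fun _ => ι)).sum_comp, Fintype.sum_prod_type]
      rfl
    have h2 : ∀ t u, (∑ i, if π t i = u then F i ^ 2 else 0) = ∑ x, h t x u := by
      intro t u
      rw [hsplit]
    rw [hsplit]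
    simp only [h2]
    have step1 : ∀ x, ∑ i, F (Fin.cons x i) ^ q ≤ ∏ t, (∑ u, h t x u ^ (p / 2)) ^ (q * θ t / p) := by
      intro x
      apply ih (fun t c => S t c.succ) (fun c => hS c.succ) (fun t i => π t (Fin.cons x i))
      intro t c hc i j hij
      have := hπ t c.succ hc _ _ hij
      simpa using this
    refine (Finset.sum_le_sum fun x _ => step1 x).trans ?_
    set r : T → ℝ := fun t => if S t 0 then p else 2 with hr
    have hrpos : ∀ t, 0 < r t := by intro t; simp only [hr]; split_ifs <;> linarith
    have e1 : ∀ (a : ℝ≥0) t, a ^ (q * θ t / p) = (a ^ (r t / p)) ^ (q * θ t / r t) := by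
      intro a t
      rw [← NNReal.rpow_mul]
      congr 1
      have := (hrpos t).ne'
      field_simp
    simp only [e1]
    refine (bh_holder Finset.univ Finset.univ (fun t x => (∑ u, h t x u ^ (p / 2)) ^ (r t / p))
      (fun t => q * θ t / r t) ?_ (hS 0)).trans ?_
    · intro t _
      have := hrpos t
      have := hθ t
      positivity
    apply Finset.prod_le_prod'
    intro t _
    apply NNReal.rpow_le_rpow
    swap
    · have := hrpos t
      have := hθ t
      positivity
    by_cases hs : S t 0
    · have : r t / p = 1 := by simp only [hr, if_pos hs]; field_simp
      simp only [this, NNReal.rpow_one]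
      rw [Finset.sum_comm]
      apply Finset.sum_le_sum
      intro u _
      by_cases hex : ∃ x, h t x u ≠ 0
      · obtain ⟨x, hx⟩ := hex
        have huniq : ∀ y, y ≠ x → h t y u = 0 := by
          intro y hy
          by_contra hne
          obtain ⟨i, _, hi⟩ := Finset.exists_ne_zero_of_sum_ne_zero hx
          obtain ⟨j, _, hj⟩ := Finset.exists_ne_zero_of_sum_ne_zero hne
          have hi' : π t (Fin.cons x i) = u := by by_contra hc; simp [hc] at hi
          have hj' : π t (Fin.cons y j) = u := by by_contra hc; simp [hc] at hj
          have := hπ t 0 hs _ _ (hj'.trans hi'.symm)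
          simp at this
          exact hy this
        rw [Finset.sum_eq_single x, Finset.sum_eq_single x]
        · intro y _ hy; exact huniq y hy
        · simp
        · intro y _ hy; rw [huniq y hy, NNReal.zero_rpow (by linarith)]
        · simp
      · push Not at hex
        simp only [hex]
        rw [NNReal.zero_rpow (by linarith)]
        simp
    · have : r t / p = 2 / p := by simp only [hr, if_neg hs]
      simp only [this]
      have hm := bh_minkowski Finset.univ Finset.univ (fun u x => h t x u ^ (p / 2))
        (r := 2 / p) (by rw [le_div_iff₀ (by linarith)]; linarith)
      have e2 : ∀ a : ℝ≥0, (a ^ (p / 2)) ^ (2 / p) = a := by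
        intro a
        rw [← NNReal.rpow_mul, show p / 2 * (2 / p) = 1 by field_simp, NNReal.rpow_one]
      simp only [e2, one_div_div] at hm
      have := NNReal.rpow_le_rpow hm (z := 2 / p) (by positivity)
      rwa [e2] at this

/-- root of unity grid on the torus -/
noncomputable def bhPt {ι : Type} (N : ℕ) (g : ι → Fin N) : ι → ℂ :=
  fun x => Complex.exp (2 * Real.pi * Complex.I / N) ^ (g x : ℕ)

theorem bhPt_norm {ι : Type} (N : ℕ) (g : ι → Fin N) (x : ι) : ‖bhPt N g x‖ = 1 := by
  unfold bhPt
  have hN : N ≠ 0 := by rintro rfl; exact (g x).elim0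
  rw [norm_pow, (Complex.isPrimitiveRoot_exp N hN).norm'_eq_one hN, one_pow]

theorem bh_orth (N a b : ℕ) (ha : a < N) (hb : b < N) :
    ∑ j : Fin N, (Complex.exp (2 * Real.pi * Complex.I / N) ^ (j : ℕ)) ^ a *
      (starRingEnd ℂ) ((Complex.exp (2 * Real.pi * Complex.I / N) ^ (j : ℕ)) ^ b)
      = if a = b then (N : ℂ) else 0 := by
  have hN : N ≠ 0 := by omega
  have hprim := Complex.isPrimitiveRoot_exp N hN
  set ω := Complex.exp (2 * Real.pi * Complex.I / N) with hω
  have hnorm : ‖ω‖ = 1 := hprim.norm'_eq_one hN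
  have hω0 : ω ≠ 0 := hprim.ne_zero hN
  have hconj : (starRingEnd ℂ) ω = ω⁻¹ := by
    rw [Complex.inv_def, Complex.normSq_eq_norm_sq, hnorm]; simp
  have h1 : ∀ j : Fin N, (ω ^ (j : ℕ)) ^ a * (starRingEnd ℂ) ((ω ^ (j : ℕ)) ^ b)
      = (ω ^ a * (ω ^ b)⁻¹) ^ (j : ℕ) := by
    intro j
    rw [map_pow, map_pow, hconj, mul_pow, inv_pow, inv_pow, inv_pow]
    congr 1
    · ring
    · ring
  simp only [h1]
  split_ifs with hab
  · subst hab
    rw [mul_inv_cancel₀ (pow_ne_zero _ hω0)]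
    simp
  · set η := ω ^ a * (ω ^ b)⁻¹
    have hη : η ≠ 1 := by
      intro h
      apply hab
      apply hprim.pow_inj ha hb
      have := congrArg (· * ω ^ b) h
      simpa [η, hω0] using this
    have hηN : η ^ N = 1 := by
      simp only [η, mul_pow, inv_pow, ← pow_mul, mul_comm _ N]
      rw [pow_mul, pow_mul, hprim.pow_eq_one]; simp
    rw [Fin.sum_univ_eq_sum_range (fun j => η ^ j) N]
    have := mul_geom_sum η N
    rw [hηN, sub_self] at this
    rcases mul_eq_zero.mp this with h | h
    · exact absurd (sub_eq_zero.mp h) hη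
    · exact h

theorem bh_parseval {ι : Type} [Fintype ι] [DecidableEq ι] (N : ℕ) (R : MvPolynomial ι ℂ)
    (hR : ∀ α ∈ R.support, ∀ x, α x < N) :
    ∑ g : ι → Fin N, ‖eval (bhPt N g) R‖ ^ 2
      = (N : ℝ) ^ Fintype.card ι * ∑ α ∈ R.support, ‖coeff α R‖ ^ 2 := by
  have hc : ∀ z : ℂ, ((‖z‖ ^ 2 : ℝ) : ℂ) = z * (starRingEnd ℂ) z := by
    intro z
    rw [Complex.mul_conj, Complex.normSq_eq_norm_sq]
  apply Complex.ofReal_injective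
  push_cast
  simp only [← Complex.ofReal_pow]
  simp only [hc, eval_eq']
  simp only [map_sum, Finset.sum_mul_sum]
  rw [Finset.sum_comm]
  rw [Finset.mul_sum]
  apply Finset.sum_congr rfl
  intro α hα
  rw [Finset.sum_comm]
  have key : ∀ β ∈ R.support, ∑ g : ι → Fin N, (coeff α R * ∏ i, bhPt N g i ^ α i) *
      (starRingEnd ℂ) (coeff β R * ∏ i, bhPt N g i ^ β i)
      = if α = β then (N : ℂ) ^ Fintype.card ι * (coeff α R * (starRingEnd ℂ) (coeff β R)) else 0 := by
    intro β hβ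
    have e1 : ∀ g : ι → Fin N, (coeff α R * ∏ i, bhPt N g i ^ α i) *
      (starRingEnd ℂ) (coeff β R * ∏ i, bhPt N g i ^ β i)
      = (coeff α R * (starRingEnd ℂ) (coeff β R)) *
        ∏ i, (bhPt N g i ^ α i * (starRingEnd ℂ) (bhPt N g i ^ β i)) := by
      intro g
      rw [map_mul, map_prod, Finset.prod_mul_distrib]
      ring
    simp only [e1, ← Finset.mul_sum]
    unfold bhPt
    have e2 := (Fintype.prod_sum (fun (i : ι) (j : Fin N) =>
      ((Complex.exp (2 * Real.pi * Complex.I / N) ^ (j : ℕ)) ^ α i *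
      (starRingEnd ℂ) ((Complex.exp (2 * Real.pi * Complex.I / N) ^ (j : ℕ)) ^ β i))))
    rw [← e2]
    simp only [bh_orth N _ _ (hR α hα _) (hR β hβ _)]
    split_ifs with h
    · subst h
      simp [mul_comm]
    · have : ∃ i, α i ≠ β i := by
        by_contra hcon
        push Not at hcon
        exact h (Finsupp.ext hcon)
      obtain ⟨i, hi⟩ := this
      rw [Finset.prod_eq_zero (Finset.mem_univ i) (if_neg hi), mul_zero]
  rw [Finset.sum_congr rfl key]
  simp only [Finset.sum_ite_eq, hα, if_true]

theorem bh_card_antidiagonal {ι : Type} [Fintype ι] [DecidableEq ι] (γ : ι →₀ ℕ) :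
    (Finset.HasAntidiagonal.antidiagonal γ).card ≤ 2 ^ γ.degree := by
  have h1 : (Finset.HasAntidiagonal.antidiagonal γ).card ≤ (Finset.Iic γ).card := by
    apply Finset.card_le_card_of_injOn Prod.fst
    · intro x hx
      simp only [Finset.mem_coe, Finset.HasAntidiagonal.mem_antidiagonal] at hx
      simp only [Finset.mem_coe, Finset.mem_Iic]
      rw [← hx]
      exact le_self_add
    · intro x hx y hy hxy
      simp only [Finset.mem_coe, Finset.HasAntidiagonal.mem_antidiagonal] at hx hy
      ext1
      · exact hxy
      · rw [← hy, hxy] at hx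
        exact add_left_cancel hx
  refine h1.trans ?_
  rw [Finsupp.card_Iic, Finsupp.degree_apply, ← Finset.prod_pow_eq_pow_sum]
  apply Finset.prod_le_prod'
  intro i _
  simp only [Nat.card_Iic]
  exact Nat.succ_le_of_lt Nat.lt_two_pow_self

theorem bh_sq {ι : Type} [Fintype ι] [DecidableEq ι] (d : ℕ) (R : MvPolynomial ι ℂ)
    (hR : R.IsHomogeneous d) :
    ∑ γ ∈ (R * R).support, ‖coeff γ (R * R)‖ ^ 2 ≤
      4 ^ d * (∑ α ∈ R.support, ‖coeff α R‖ ^ 2) ^ 2 := by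
  have h1 : ∀ γ ∈ (R * R).support, ‖coeff γ (R * R)‖ ^ 2 ≤
      4 ^ d * ∑ x ∈ Finset.HasAntidiagonal.antidiagonal γ, ‖coeff x.1 R‖ ^ 2 * ‖coeff x.2 R‖ ^ 2 := by
    intro γ hγ
    have hdeg : γ.degree = d + d := by
      by_contra hne
      exact (mem_support_iff.mp hγ) ((hR.mul hR).coeff_eq_zero hne)
    rw [coeff_mul]
    calc ‖∑ x ∈ Finset.HasAntidiagonal.antidiagonal γ, coeff x.1 R * coeff x.2 R‖ ^ 2
        ≤ (∑ x ∈ Finset.HasAntidiagonal.antidiagonal γ, ‖coeff x.1 R * coeff x.2 R‖) ^ 2 := by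
          gcongr; exact norm_sum_le _ _
      _ ≤ (Finset.HasAntidiagonal.antidiagonal γ).card * ∑ x ∈ Finset.HasAntidiagonal.antidiagonal γ, ‖coeff x.1 R * coeff x.2 R‖ ^ 2 :=
          sq_sum_le_card_mul_sum_sq
      _ ≤ _ := by
          simp only [norm_mul, mul_pow]
          gcongr
          have := bh_card_antidiagonal γ
          rw [hdeg, ← two_mul, pow_mul] at this
          exact_mod_cast this
  refine (Finset.sum_le_sum h1).trans ?_
  rw [← Finset.mul_sum]
  gcongr
  rw [sq, Finset.sum_mul_sum, ← Finset.sum_product']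
  have h2 : ∀ γ, ∑ x ∈ Finset.HasAntidiagonal.antidiagonal γ, ‖coeff x.1 R‖ ^ 2 * ‖coeff x.2 R‖ ^ 2
      = ∑ x ∈ R.support ×ˢ R.support with x.1 + x.2 = γ, ‖coeff x.1 R‖ ^ 2 * ‖coeff x.2 R‖ ^ 2 := by
    intro γ
    symm
    apply Finset.sum_subset
    · intro x hx
      simp only [Finset.mem_filter] at hx
      simpa using hx.2
    · intro x hx hx'
      simp only [Finset.HasAntidiagonal.mem_antidiagonal] at hx
      simp only [Finset.mem_filter, Finset.mem_product, mem_support_iff, hx, and_true, not_and_or,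
        not_not] at hx'
      rcases hx' with h | h <;> simp [h]
  simp only [h2]
  apply Finset.sum_fiberwise_le_sum_of_sum_fiber_nonneg
  intro γ _
  positivity

open scoped NNReal in
theorem bh_hyper {ι : Type} [Fintype ι] [DecidableEq ι] (d N : ℕ) (hN : 2 * d < N)
    (R : MvPolynomial ι ℂ) (hR : R.IsHomogeneous d) (p : ℝ) (hp : 1 ≤ p) (hp2 : p < 2) :
    (∑ α ∈ R.support, ‖coeff α R‖₊ ^ 2) ^ (p / 2) ≤
      (4 : ℝ≥0) ^ (d * (2 - p) / 2) *
        ((∑ g : ι → Fin N, ‖eval (bhPt N g) R‖₊ ^ p) / (N : ℝ≥0) ^ Fintype.card ι) := by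
  set V : ℝ≥0 := ∑ α ∈ R.support, ‖coeff α R‖₊ ^ 2 with hV
  set K : ℝ≥0 := (N : ℝ≥0) ^ Fintype.card ι with hK
  have hK0 : K ≠ 0 := by
    apply pow_ne_zero
    exact_mod_cast (by omega : N ≠ 0)
  have hdeg : ∀ (e : ℕ) (Q : MvPolynomial ι ℂ), Q.IsHomogeneous e → e < N →
      ∀ α ∈ Q.support, ∀ x, α x < N := by
    intro e Q hQ he α hα x
    have h1 : α.degree = e := by
      by_contra hne
      exact (mem_support_iff.mp hα) (hQ.coeff_eq_zero hne)
    exact (Finsupp.le_degree x α).trans_lt (h1 ▸ he)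
  have h2 : ∑ g : ι → Fin N, ‖eval (bhPt N g) R‖₊ ^ 2 = K * V := by
    apply NNReal.eq
    simp only [hK, hV]
    push_cast
    exact bh_parseval N R (hdeg d R hR (by omega))
  have h4 : ∑ g : ι → Fin N, ‖eval (bhPt N g) R‖₊ ^ 4 ≤ K * (4 ^ d * V ^ 2) := by
    rw [← NNReal.coe_le_coe]
    simp only [hK, hV]
    push_cast
    have := bh_parseval N (R * R) (hdeg (d + d) _ (hR.mul hR) (by omega))
    calc ∑ g : ι → Fin N, ‖eval (bhPt N g) R‖ ^ 4
        = ∑ g : ι → Fin N, ‖eval (bhPt N g) (R * R)‖ ^ 2 := by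
          apply Finset.sum_congr rfl
          intro g _
          rw [map_mul, norm_mul]; ring
      _ ≤ _ := by
          rw [this]
          gcongr
          exact bh_sq d R hR
  set a : ℝ := 2 / (4 - p) with ha
  have ha0 : 0 < a := by apply div_pos <;> linarith
  have ha1 : a < 1 := by rw [ha, div_lt_one (by linarith)]; linarith
  set A : ℝ≥0 := (∑ g : ι → Fin N, ‖eval (bhPt N g) R‖₊ ^ p) / K with hA
  have hAK : ∑ g : ι → Fin N, ‖eval (bhPt N g) R‖₊ ^ p = K * A := by
    rw [hA, mul_div_cancel₀ _ hK0]
  have hH := bh_holder (Finset.univ : Finset Bool) (Finset.univ : Finset (ι → Fin N))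
    (fun b g => if b then ‖eval (bhPt N g) R‖₊ ^ p else ‖eval (bhPt N g) R‖₊ ^ 4)
    (fun b => if b then a else 1 - a) (by intro b _; cases b <;> simp <;> linarith) (by simp)
  simp only [Fintype.prod_bool, if_true, Bool.false_eq_true, if_false] at hH
  have hpa : p * a + 4 * (1 - a) = 2 := by
    rw [ha]; field_simp [show (4 - p) ≠ 0 by linarith]; ring
  have e1 : ∀ t : ℝ≥0, (t ^ p) ^ a * (t ^ 4) ^ (1 - a) = t ^ 2 := by
    intro t
    rw [← NNReal.rpow_natCast t 4, ← NNReal.rpow_mul, ← NNReal.rpow_mul,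
      ← NNReal.rpow_add_of_nonneg t (by positivity) (by push_cast; nlinarith), ← NNReal.rpow_natCast]
    congr 1
  simp only [e1, h2, hAK] at hH
  have hH2 : K * V ≤ K * (A ^ a * (4 ^ d * V ^ 2) ^ (1 - a)) := by
    refine hH.trans ?_
    calc (K * A) ^ a * (∑ g : ι → Fin N, ‖eval (bhPt N g) R‖₊ ^ 4) ^ (1 - a)
        ≤ (K * A) ^ a * (K * (4 ^ d * V ^ 2)) ^ (1 - a) := by
          gcongr
      _ = (K ^ a * K ^ (1 - a)) * (A ^ a * (4 ^ d * V ^ 2) ^ (1 - a)) := by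
          rw [NNReal.mul_rpow, NNReal.mul_rpow]; ring
      _ = _ := by
          rw [← NNReal.rpow_add hK0]; simp
  have hH3 : V ≤ A ^ a * (4 ^ d * V ^ 2) ^ (1 - a) :=
    le_of_mul_le_mul_left hH2 (pos_iff_ne_zero.mpr hK0)
  by_cases hV0 : V = 0
  · rw [hV0, NNReal.zero_rpow (by linarith)]; exact zero_le
  have hH4 : V ^ (2 * a - 1) ≤ A ^ a * 4 ^ (d * (1 - a)) := by
    have hpos : 0 < V ^ (2 * (1 - a)) := NNReal.rpow_pos (pos_iff_ne_zero.mpr hV0)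
    refine le_of_mul_le_mul_right ?_ hpos
    rw [← NNReal.rpow_add hV0, show 2 * a - 1 + 2 * (1 - a) = 1 by ring, NNReal.rpow_one]
    refine hH3.trans (le_of_eq ?_)
    rw [NNReal.mul_rpow, ← NNReal.rpow_natCast, ← NNReal.rpow_natCast, ← NNReal.rpow_mul,
      ← NNReal.rpow_mul]
    push_cast
    ring
  have hH5 := NNReal.rpow_le_rpow hH4 (z := 1 / a) (by positivity)
  rw [NNReal.mul_rpow, ← NNReal.rpow_mul, ← NNReal.rpow_mul, ← NNReal.rpow_mul] at hH5
  have h4p : (4 - p) ≠ 0 := by linarith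
  have ee1 : (2 * a - 1) * (1 / a) = p / 2 := by rw [ha]; field_simp; ring
  have ee2 : a * (1 / a) = 1 := by field_simp
  have ee3 : (d * (1 - a)) * (1 / a) = d * (2 - p) / 2 := by rw [ha]; field_simp; ring
  rw [ee1, ee2, ee3, NNReal.rpow_one, mul_comm] at hH5
  exact hH5

theorem bh_scale {ι : Type} {K : Type} [Field K] [Fintype ι] {d : ℕ} {R : MvPolynomial ι K}
    (hR : R.IsHomogeneous d) (c : K) (z : ι → K) :
    eval (fun x => c * z x) R = c ^ d * eval z R := by
  rw [eval_eq', eval_eq', Finset.mul_sum]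
  apply Finset.sum_congr rfl
  intro α hα
  have h1 : α.degree = d := by
    by_contra hne
    exact (mem_support_iff.mp hα) (hR.coeff_eq_zero hne)
  simp only [mul_pow, Finset.prod_mul_distrib]
  rw [Finset.prod_pow_eq_pow_sum, ← Finsupp.degree_eq_sum, h1]
  ring

theorem bh_pderiv_homog {ι : Type} {d : ℕ} {R : MvPolynomial ι ℂ}
    (hR : R.IsHomogeneous d) (x : ι) : (pderiv x R).IsHomogeneous (d - 1) := by
  exact hR.pderiv

/-- directional derivative -/
noncomputable def bhDir {ι : Type} [Fintype ι] (w : ι → ℂ) (R : MvPolynomial ι ℂ) :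
    MvPolynomial ι ℂ := ∑ x, C (w x) * pderiv x R

theorem bhDir_hasDerivAt {ι : Type} [Fintype ι] [DecidableEq ι] (w z : ι → ℂ)
    (R : MvPolynomial ι ℂ) (s : ℂ) :
    HasDerivAt (fun s : ℂ => eval (fun x => z x + s * w x) R)
      (eval (fun x => z x + s * w x) (bhDir w R)) s := by
  induction R using MvPolynomial.induction_on with
  | C a => simpa [bhDir] using hasDerivAt_const s a
  | add p q hp hq =>
    have := hp.add hq
    simp only [bhDir, map_add, mul_add, Finset.sum_add_distrib] at this ⊢
    exact this
  | mul_X p i hp =>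
    have h1 : HasDerivAt (fun s : ℂ => z i + s * w i) (w i) s := by
      simpa using ((hasDerivAt_id s).mul_const (w i)).const_add (z i)
    have := hp.mul h1
    simp only [map_mul, eval_X]
    suffices hval : eval (fun x => z x + s * w x) (bhDir w (p * X i)) =
      eval (fun x => z x + s * w x) (bhDir w p) * (z i + s * w i) +
        eval (fun x => z x + s * w x) p * w i by
      rw [hval]; exact this
    simp only [bhDir, map_sum, map_mul, eval_C, Derivation.leibniz, smul_eq_mul, map_add, eval_X,
      pderiv_X, mul_add, Finset.sum_add_distrib, Finset.sum_mul]
    rw [add_comm]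
    congr 1
    · rw [← Finset.sum_add_distrib]
      apply Finset.sum_congr rfl
      intro x _
      ring
    · rw [Finset.sum_eq_single i]
      · simp; ring
      · intro b _ hb
        simp [Ne.symm hb]
      · simp

theorem bhDir_homog {ι : Type} [Fintype ι] (w : ι → ℂ) {d : ℕ} {R : MvPolynomial ι ℂ}
    (hR : R.IsHomogeneous d) : (bhDir w R).IsHomogeneous (d - 1) := by
  apply IsHomogeneous.sum
  intro x _
  exact (bh_pderiv_homog hR x).C_mul _

theorem bhDir_bound {ι : Type} [Fintype ι] [DecidableEq ι] {d : ℕ} {R : MvPolynomial ι ℂ}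
    (hR : R.IsHomogeneous d) {M : ℝ} (hM : ∀ z : ι → ℂ, (∀ x, ‖z x‖ ≤ 1) → ‖eval z R‖ ≤ M)
    (w z : ι → ℂ) (hw : ∀ x, ‖w x‖ ≤ 1) (hz : ∀ x, ‖z x‖ ≤ 1) :
    ‖eval z (bhDir w R)‖ ≤ 3 * d * M := by
  rcases Nat.eq_zero_or_pos d with hd | hd
  · subst hd
    have : R = C (coeff 0 R) := by
      exact totalDegree_eq_zero_iff_eq_C.mp (Nat.le_zero.mp hR.totalDegree_le)
    rw [this]
    simp [bhDir]
  · have hd' : (0 : ℝ) < d := by exact_mod_cast hd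
    have hder := bhDir_hasDerivAt w z R 0
    simp only [zero_mul, add_zero] at hder
    rw [← hder.deriv]
    have hM0 : 0 ≤ M := (norm_nonneg _).trans (hM z hz)
    have hr : (0 : ℝ) < 1 / d := by positivity
    have h1 := Complex.norm_deriv_le_of_forall_mem_sphere_norm_le
      (c := (0:ℂ)) (R := 1 / (d:ℝ)) (C := 3 * M) (f := fun s : ℂ => eval (fun x => z x + s * w x) R) hr
      (by
        apply Differentiable.diffContOnCl
        intro s
        exact (bhDir_hasDerivAt w z R s).differentiableAt)
      (by
        intro s hs
        have hs' : ‖s‖ = 1 / d := by simpa using hs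
        set c : ℝ := 1 + 1 / d with hc
        have hc0 : 0 < c := by positivity
        have hcc : (c : ℂ) ≠ 0 := by exact_mod_cast hc0.ne'
        have h2 : (fun x => z x + s * w x) = fun x => (c : ℂ) * ((z x + s * w x) / c) := by
          funext x
          field_simp
        rw [h2, bh_scale hR, norm_mul, norm_pow]
        have h3 : ‖eval (fun x => (z x + s * w x) / (c:ℂ)) R‖ ≤ M := by
          apply hM
          intro x
          rw [norm_div, Complex.norm_real, Real.norm_of_nonneg hc0.le, div_le_one hc0]
          calc ‖z x + s * w x‖ ≤ ‖z x‖ + ‖s‖ * ‖w x‖ := by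
                rw [← norm_mul]; exact norm_add_le _ _
            _ ≤ 1 + 1 / d * 1 := by
                rw [hs']
                gcongr
                · exact hz x
                · exact hw x
            _ = c := by rw [hc]; ring
        rw [Complex.norm_real, Real.norm_of_nonneg hc0.le]
        have h4 : c ^ d ≤ 3 := by
          have : c ≤ Real.exp (1 / d) := by
            have := Real.add_one_le_exp (1 / (d:ℝ)); linarith
          calc c ^ d ≤ (Real.exp (1 / d)) ^ d := by gcongr
            _ = Real.exp 1 := by
              rw [← Real.exp_nat_mul]; congr 1; field_simp
            _ ≤ 3 := by have := Real.exp_one_lt_d9; linarith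
        gcongr)
    refine h1.trans (le_of_eq ?_)
    field_simp

/-- iterated partial derivatives -/
noncomputable def bhD {ι : Type} : (k : ℕ) → (Fin k → ι) → MvPolynomial ι ℂ →ₗ[ℂ] MvPolynomial ι ℂ
  | 0, _ => LinearMap.id
  | k + 1, u => (bhD k (Fin.tail u)).comp (pderiv (u 0)).toLinearMap

theorem bhD_homog {ι : Type} (k : ℕ) : ∀ (u : Fin k → ι) {d : ℕ} {R : MvPolynomial ι ℂ}
    (_hR : R.IsHomogeneous d), (bhD k u R).IsHomogeneous (d - k) := by
  induction k with
  | zero => intro u d R hR; simpa [bhD] using hR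
  | succ k ih =>
    intro u d R hR
    have := ih (Fin.tail u) (bh_pderiv_homog hR (u 0))
    rw [show d - (k + 1) = d - 1 - k by omega]
    exact this

theorem bhD_coeff {ι : Type} (k : ℕ) : ∀ (u : Fin k → ι) (R : MvPolynomial ι ℂ) (β : ι →₀ ℕ),
    ‖coeff (β + ∑ t, Finsupp.single (u t) 1) R‖ ≤ ‖coeff β (bhD k u R)‖ := by
  induction k with
  | zero => intro u R β; simp [bhD]
  | succ k ih =>
    intro u R β
    have := ih (Fin.tail u) (pderiv (u 0) R) β
    refine le_trans ?_ this
    rw [coeff_pderiv, Fin.sum_univ_succ, norm_mul]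
    have e : β + (Finsupp.single (u 0) 1 + ∑ i : Fin k, Finsupp.single (u i.succ) 1)
      = β + ∑ t, Finsupp.single (Fin.tail u t) 1 + Finsupp.single (u 0) 1 := by
      simp only [Fin.tail]; abel
    rw [e]
    apply le_mul_of_one_le_right (norm_nonneg _)
    rw [← Nat.cast_succ, Complex.norm_natCast]
    exact_mod_cast Nat.succ_le_succ (Nat.zero_le _)

theorem bhD_bound {ι : Type} [Fintype ι] [DecidableEq ι] (m k : ℕ) :
    ∀ {d : ℕ} (_hd : d ≤ m) {R : MvPolynomial ι ℂ} (_hR : R.IsHomogeneous d) {M : ℝ}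
    (_hM : ∀ z : ι → ℂ, (∀ x, ‖z x‖ ≤ 1) → ‖eval z R‖ ≤ M)
    (w : Fin k → ι → ℂ) (z : ι → ℂ) (_hw : ∀ t x, ‖w t x‖ ≤ 1) (_hz : ∀ x, ‖z x‖ ≤ 1),
    ‖∑ u : Fin k → ι, eval z (bhD k u R) * ∏ t, w t (u t)‖ ≤ (3 * m) ^ k * M := by
  induction k with
  | zero => intro d hd R hR M hM w z hw hz; simpa [bhD] using hM z hz
  | succ k ih =>
    intro d hd R hR M hM w z hw hz
    have hM0 : 0 ≤ M := (norm_nonneg _).trans (hM z hz)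
    have h1 := ih (d := d - 1) (by omega) (bhDir_homog (w 0) hR) (M := 3 * m * M)
      (by
        intro z hz
        refine (bhDir_bound hR hM (w 0) z (hw 0) hz).trans ?_
        gcongr) (Fin.tail w) z (fun t x => hw t.succ x) hz
    rw [show (3 * (m:ℝ)) ^ (k+1) * M = (3 * m) ^ k * (3 * m * M) by ring]
    convert h1 using 2
    rw [← (Fin.consEquiv (fun _ => ι)).sum_comp, Fintype.sum_prod_type, Finset.sum_comm]
    apply Finset.sum_congr rfl
    intro u _
    simp only [bhDir, map_sum, Finset.sum_mul]
    apply Finset.sum_congr rfl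
    intro x _
    rw [← smul_eq_C_mul, map_smul, smul_eval]
    simp only [Fin.consEquiv, Equiv.coe_fn_mk, bhD, Fin.prod_univ_succ, Fin.cons_zero, Fin.cons_succ,
      LinearMap.comp_apply, Fin.tail_cons, Fin.tail]
    simp only [Derivation.coeFn_coe]
    ring

open scoped NNReal in
/-- multilinear BH -/
def BhM (k : ℕ) (B : ℝ≥0) : Prop :=
  ∀ (ι : Type) [Fintype ι] [DecidableEq ι] (c : (Fin k → ι) → ℂ) (M : ℝ≥0),
    (∀ w : Fin k → ι → ℂ, (∀ t x, ‖w t x‖ ≤ 1) → ‖∑ u, c u * ∏ t, w t (u t)‖ ≤ M) →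
    ∑ u, ‖c u‖₊ ^ (2 * k / (k + 1) : ℝ) ≤ (B * M) ^ (2 * k / (k + 1) : ℝ)

open scoped NNReal in
/-- polynomial BH -/
def BhP (m : ℕ) (K : ℝ≥0) : Prop :=
  ∀ (ι : Type) [Fintype ι] [DecidableEq ι] (P : MvPolynomial ι ℂ) (M : ℝ≥0),
    P.IsHomogeneous m → (∀ z : ι → ℂ, (∀ x, ‖z x‖ ≤ 1) → ‖eval z P‖ ≤ M) →
    ∑ α ∈ P.support, ‖coeff α P‖₊ ^ (2 * m / (m + 1) : ℝ) ≤ (K * M) ^ (2 * m / (m + 1) : ℝ)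

theorem bh_section {ι : Type} (m : ℕ) : ∀ (α : ι →₀ ℕ), α.degree = m →
    ∃ i : Fin m → ι, ∑ t, Finsupp.single (i t) 1 = α := by
  induction m with
  | zero =>
    intro α hα
    rw [Finsupp.degree_eq_zero_iff] at hα
    exact ⟨Fin.elim0, by simp [hα]⟩
  | succ m ih =>
    intro α hα
    have : ∃ x, α x ≠ 0 := by
      by_contra hcon
      push Not at hcon
      have : α = 0 := Finsupp.ext hcon
      simp [this] at hα
    obtain ⟨x, hx⟩ := this
    have hle : Finsupp.single x 1 ≤ α := by
      rw [Finsupp.single_le_iff]; omega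
    obtain ⟨β, rfl⟩ := exists_add_of_le hle
    rw [map_add, Finsupp.degree_single] at hα
    obtain ⟨i, hi⟩ := ih β (by omega)
    exact ⟨Fin.cons x i, by simp [Fin.sum_univ_succ, hi]⟩

open scoped NNReal in
theorem bh_local {ι : Type} [Fintype ι] [DecidableEq ι] (m k : ℕ) (hk : 1 ≤ k)
    (B : ℝ≥0) (hB : BhM k B) (P : MvPolynomial ι ℂ) (M : ℝ≥0)
    (hP : P.IsHomogeneous m) (hM : ∀ z : ι → ℂ, (∀ x, ‖z x‖ ≤ 1) → ‖eval z P‖ ≤ M)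
    (F : (Fin m → ι) → ℝ≥0) (s : (ι →₀ ℕ) → (Fin m → ι))
    (hF : ∀ i, F i ≤ ‖coeff (∑ t, Finsupp.single (i t) 1) P‖₊)
    (hF0 : ∀ i, F i ≠ 0 → s (∑ t, Finsupp.single (i t) 1) = i)
    (e : Fin k → Fin m) (he : Function.Injective e) :
    ∑ u : Fin k → ι, (∑ i, if (i ∘ e) = u then F i ^ 2 else 0) ^ ((2 * k / (k + 1) : ℝ) / 2) ≤
      (4 : ℝ≥0) ^ (m * (2 - (2 * k / (k + 1) : ℝ)) / 2) * (B * ((3 * m) ^ k * M)) ^ (2 * k / (k + 1) : ℝ) := by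
  set p : ℝ := 2 * k / (k + 1) with hp
  have hk' : (1 : ℝ) ≤ k := by exact_mod_cast hk
  have hp1 : 1 ≤ p := by rw [hp, le_div_iff₀ (by positivity)]; linarith
  have hp2 : p < 2 := by rw [hp, div_lt_iff₀ (by positivity)]; linarith
  set N := 2 * m + 1 with hN
  set K : ℝ≥0 := (N : ℝ≥0) ^ Fintype.card ι with hK
  have hK0 : K ≠ 0 := by
    apply pow_ne_zero
    exact_mod_cast (by omega : N ≠ 0)
  have h1 : ∀ u : Fin k → ι, (∑ i, if (i ∘ e) = u then F i ^ 2 else 0) ≤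
      ∑ β ∈ (bhD k u P).support, ‖coeff β (bhD k u P)‖₊ ^ 2 := by
    intro u
    set b : (Fin m → ι) → (ι →₀ ℕ) := fun i =>
      ∑ c ∈ Finset.univ.filter (fun c => c ∉ Set.range e), Finsupp.single (i c) 1 with hb
    have hab : ∀ i, i ∘ e = u → ∑ t, Finsupp.single (i t) 1 = b i + ∑ t, Finsupp.single (u t) 1 := by
      intro i hi
      rw [← Finset.sum_filter_add_sum_filter_not Finset.univ (fun c => c ∉ Set.range e)]
      congr 1
      have : Finset.univ.filter (fun c => ¬ (c ∉ Set.range e)) = Finset.univ.image e := by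
        ext c; simp
      rw [this, Finset.sum_image (fun x _ y _ h => he h), ← hi]
      rfl
    set A := Finset.univ.filter (fun i => i ∘ e = u ∧ F i ≠ 0) with hA
    have s1 : (∑ i, if (i ∘ e) = u then F i ^ 2 else 0) = ∑ i ∈ A, F i ^ 2 := by
      rw [hA, Finset.sum_filter]
      apply Finset.sum_congr rfl
      intro i _
      by_cases h1 : i ∘ e = u <;> by_cases h2 : F i = 0 <;> simp [h1, h2]
    have hle : ∀ i ∈ A, F i ≤ ‖coeff (b i) (bhD k u P)‖₊ := by
      intro i hi
      simp only [hA, Finset.mem_filter, Finset.mem_univ, true_and] at hi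
      refine (hF i).trans ?_
      rw [hab i hi.1]
      exact bhD_coeff k u P (b i)
    have hinj : Set.InjOn b A := by
      intro i hi j hj hij
      simp only [hA, Finset.coe_filter, Finset.mem_univ, true_and, Set.mem_ofPred_eq] at hi hj
      rw [← hF0 i hi.2, ← hF0 j hj.2, hab i hi.1, hab j hj.1, hij]
    rw [s1]
    calc ∑ i ∈ A, F i ^ 2 ≤ ∑ i ∈ A, ‖coeff (b i) (bhD k u P)‖₊ ^ 2 := by
          apply Finset.sum_le_sum
          intro i hi
          gcongr
          exact hle i hi
      _ = ∑ β ∈ A.image b, ‖coeff β (bhD k u P)‖₊ ^ 2 := by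
          rw [Finset.sum_image hinj]
      _ ≤ _ := by
          apply Finset.sum_le_sum_of_subset
          intro β hβ
          obtain ⟨i, hi, rfl⟩ := Finset.mem_image.mp hβ
          rw [mem_support_iff]
          intro h0
          have := hle i hi
          rw [h0] at this
          simp only [nnnorm_zero, nonpos_iff_eq_zero] at this
          simp only [hA, Finset.mem_filter, Finset.mem_univ, true_and] at hi
          exact hi.2 this
  have h2 : ∀ u : Fin k → ι, (∑ i, if (i ∘ e) = u then F i ^ 2 else 0) ^ (p / 2) ≤
      (4 : ℝ≥0) ^ (m * (2 - p) / 2) *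
        ((∑ g : ι → Fin N, ‖eval (bhPt N g) (bhD k u P)‖₊ ^ p) / K) := by
    intro u
    refine (NNReal.rpow_le_rpow (h1 u) (by linarith)).trans ?_
    refine (bh_hyper (m - k) N (by omega) _ (bhD_homog k u hP) p hp1 hp2).trans ?_
    gcongr
    · norm_num
    · omega
  refine (Finset.sum_le_sum fun u _ => h2 u).trans ?_
  rw [← Finset.mul_sum, ← Finset.sum_div, Finset.sum_comm]
  gcongr
  rw [div_le_iff₀ (pos_iff_ne_zero.mpr hK0)]
  have h3 : ∀ g : ι → Fin N, ∑ u, ‖eval (bhPt N g) (bhD k u P)‖₊ ^ p ≤ (B * ((3 * m) ^ k * M)) ^ p := by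
    intro g
    apply hB ι (fun u => eval (bhPt N g) (bhD k u P)) ((3 * m) ^ k * M)
    intro w hw
    push_cast
    exact bhD_bound m k le_rfl hP hM w (bhPt N g) hw (fun x => (bhPt_norm N g x).le)
  refine (Finset.sum_le_sum fun g _ => h3 g).trans (le_of_eq ?_)
  rw [Finset.sum_const, Finset.card_univ, Fintype.card_fun, Fintype.card_fin, nsmul_eq_mul, mul_comm]
  push_cast
  rfl

open scoped NNReal in
theorem bh_main (m k : ℕ) (hk : 1 ≤ k) (hkm : k ≤ m) (B : ℝ≥0) (hB : BhM k B) :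
    BhP m ((2 : ℝ≥0) ^ ((m : ℝ) / k) * B * (3 * m) ^ k) := by
  intro ι _ _ P M hP hM
  have : NeZero m := ⟨by omega⟩
  set q : ℝ := 2 * m / (m + 1) with hq
  set p : ℝ := 2 * k / (k + 1) with hp
  have hk' : (1 : ℝ) ≤ k := by exact_mod_cast hk
  have hm' : (1 : ℝ) ≤ m := by exact_mod_cast hk.trans hkm
  have hq0 : 0 < q := by positivity
  have hp1 : 1 ≤ p := by rw [hp, le_div_iff₀ (by positivity)]; linarith
  have hp2 : p < 2 := by rw [hp, div_lt_iff₀ (by positivity)]; linarith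
  have hsec0 : ∀ α ∈ P.support, ∃ i : Fin m → ι, ∑ t, Finsupp.single (i t) 1 = α := by
    intro α hα
    apply bh_section m α
    by_contra hne
    exact (mem_support_iff.mp hα) (hP.coeff_eq_zero hne)
  rcases P.support.eq_empty_or_nonempty with hemp | ⟨α₀, hα₀⟩
  · rw [hemp]; simp
  obtain ⟨i₀, -⟩ := hsec0 α₀ hα₀
  have hsec : ∀ α : ι →₀ ℕ, ∃ i : Fin m → ι, α ∈ P.support → ∑ t, Finsupp.single (i t) 1 = α := by
    intro α
    by_cases hα : α ∈ P.support
    · obtain ⟨i, hi⟩ := hsec0 α hα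
      exact ⟨i, fun _ => hi⟩
    · exact ⟨i₀, fun h => absurd h hα⟩
  choose s hs using hsec
  set F : (Fin m → ι) → ℝ≥0 := fun i =>
    if s (∑ t, Finsupp.single (i t) 1) = i then ‖coeff (∑ t, Finsupp.single (i t) 1) P‖₊ else 0 with hF
  have hsum : ∑ α ∈ P.support, ‖coeff α P‖₊ ^ q ≤ ∑ i, F i ^ q := by
    have hinj : Set.InjOn s P.support := by
      intro α hα β hβ h
      rw [← hs α hα, ← hs β hβ, h]
    calc ∑ α ∈ P.support, ‖coeff α P‖₊ ^ q = ∑ α ∈ P.support, F (s α) ^ q := by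
          apply Finset.sum_congr rfl
          intro α hα
          simp only [hF, hs α hα, if_true]
      _ = ∑ i ∈ P.support.image s, F i ^ q := by rw [Finset.sum_image hinj]
      _ ≤ _ := Finset.sum_le_sum_of_subset (Finset.subset_univ _)
  refine hsum.trans ?_
  set e : Fin m → Fin k → Fin m := fun t j => t + Fin.castLE hkm j with he
  have hblei := bh_blei (ι := ι) (T := Fin m) (U := Fin k → ι) p q hp1 hp2.le hq0
    (fun _ => 1 / (m : ℝ)) (fun _ => by positivity) (by simp) m
    (fun t c => (c - t).val < k)
    (by
      intro c
      have hcard : (Finset.univ.filter (fun t : Fin m => (c - t).val < k)).card = k := by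
        have : (Finset.univ.filter (fun t : Fin m => (c - t).val < k)).card =
          (Finset.univ.filter (fun j : Fin m => j.val < k)).card := by
          apply Finset.card_bij (fun t _ => c - t)
          · intro t ht; simpa using ht
          · intro t _ t' _ h; exact sub_right_injective h
          · intro j hj
            refine ⟨c - j, ?_, ?_⟩
            · simpa using hj
            · simp
        rw [this]
        have h2 : (Finset.univ.filter (fun j : Fin m => j.val < k)) = Finset.univ.image (Fin.castLE hkm) := by
          ext j
          simp only [Finset.mem_filter, Finset.mem_univ, true_and, Finset.mem_image]
          constructor
          · intro h; exact ⟨⟨j, h⟩, rfl⟩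
          · rintro ⟨a, rfl⟩; exact a.2
        rw [h2, Finset.card_image_of_injective _ (Fin.castLE_injective hkm)]
        simp
      have hpt : ∀ t : Fin m, q * (1 / (m:ℝ)) / (if (c - t).val < k then p else 2)
        = q / m / 2 + (if (c - t).val < k then q / m * (1 / p - 1 / 2) else 0) := by
        intro t
        split_ifs
        · field_simp; ring
        · ring
      rw [Finset.sum_congr rfl fun t _ => hpt t, Finset.sum_add_distrib, ← Finset.sum_filter,
        Finset.sum_const, Finset.sum_const, hcard, Finset.card_univ, Fintype.card_fin]
      simp only [nsmul_eq_mul]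
      rw [hq, hp]
      field_simp
      ring)
    (fun t i => i ∘ e t)
    (by
      intro t c hc i j hij
      have hcc : e t ⟨(c - t).val, hc⟩ = c := by
        simp only [he]
        have : Fin.castLE hkm ⟨(c - t).val, hc⟩ = c - t := by ext; simp
        rw [this]; simp
      have := congrFun hij ⟨(c - t).val, hc⟩
      simp only [Function.comp_apply, hcc] at this
      exact this) F
  refine hblei.trans ?_
  set W : ℝ≥0 := (4 : ℝ≥0) ^ (m * (2 - p) / 2) * (B * ((3 * m) ^ k * M)) ^ p with hW
  have hloc : ∀ t, (∑ u : Fin k → ι, (∑ i, if (i ∘ e t) = u then F i ^ 2 else 0) ^ (p / 2)) ≤ W := by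
    intro t
    apply bh_local m k hk B hB P M hP hM F s
    · intro i
      simp only [hF]
      split_ifs
      · exact le_rfl
      · exact zero_le
    · intro i hi
      by_contra hcon
      exact hi (by simp only [hF, if_neg hcon])
    · intro a b hab
      simp only [he] at hab
      exact Fin.castLE_injective hkm (add_left_cancel hab)
  calc ∏ t, (∑ u : Fin k → ι, (∑ i, if (i ∘ e t) = u then F i ^ 2 else 0) ^ (p / 2)) ^ (q * (1 / m) / p)
      ≤ ∏ _t : Fin m, W ^ (q * (1 / m) / p) := by
        apply Finset.prod_le_prod'
        intro t _
        exact NNReal.rpow_le_rpow (hloc t) (by positivity)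
    _ = W ^ (q / p) := by
        rw [Finset.prod_const, Finset.card_univ, Fintype.card_fin, ← NNReal.rpow_natCast,
          ← NNReal.rpow_mul]
        congr 1
        field_simp
    _ = _ := by
        rw [hW, show q / p = 1 / p * q by ring, NNReal.rpow_mul]
        congr 1
        rw [NNReal.mul_rpow, ← NNReal.rpow_mul, ← NNReal.rpow_mul, mul_one_div_cancel (by linarith),
          NNReal.rpow_one, show (4 : ℝ≥0) = 2 ^ (2 : ℝ) by norm_num, ← NNReal.rpow_mul]
        have : 2 * (m * (2 - p) / 2 * (1 / p)) = (m : ℝ) / k := by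
          rw [hp]; field_simp; ring
        rw [this]
        ring

open scoped NNReal in
theorem bh_base : BhM 1 1 := by
  intro ι _ _ c M h
  have he : (2 * (1:ℕ) / ((1:ℕ) + 1) : ℝ) = 1 := by norm_num
  simp only [he, NNReal.rpow_one, one_mul]
  have h1 := h (fun _ x => (starRingEnd ℂ) (c (fun _ => x)) / ‖c (fun _ => x)‖) (by
    intro t x
    rw [norm_div, RCLike.norm_conj, Complex.norm_real, norm_norm]
    exact div_self_le_one _)
  have h2 : ∀ u : Fin 1 → ι, c u * ∏ t, ((starRingEnd ℂ) (c (fun _ => u t)) / ‖c (fun _ => u t)‖)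
      = ((‖c u‖ : ℝ) : ℂ) := by
    intro u
    have hu : (fun _ => u 0) = u := by funext t; rw [Subsingleton.elim t 0]
    simp only [Finset.univ_unique, Finset.prod_singleton, Fin.default_eq_zero, Fin.isValue, hu]
    by_cases hc : c u = 0
    · simp [hc]
    · have : ((‖c u‖ : ℝ) : ℂ) ≠ 0 := by simpa using hc
      rw [mul_div_assoc', Complex.mul_conj, Complex.normSq_eq_norm_sq]
      push_cast
      field_simp
  simp only [h2] at h1
  rw [← Complex.ofReal_sum, Complex.norm_real, Real.norm_of_nonneg (by positivity)] at h1
  rw [← NNReal.coe_le_coe]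
  push_cast
  exact h1

open scoped NNReal in
theorem bh_poly_to_multi (k : ℕ) (hk : 1 ≤ k) (K : ℝ≥0) (hK : BhP k K) : BhM k K := by
  intro ι _ _ c M h
  set q : ℝ := 2 * k / (k + 1) with hq
  have hk' : (1 : ℝ) ≤ k := by exact_mod_cast hk
  have hq0 : q ≠ 0 := by positivity
  set a : (Fin k → ι) → (Fin k × ι →₀ ℕ) := fun u => ∑ t, Finsupp.single (t, u t) 1 with ha
  have hval : ∀ u t x, a u (t, x) = if u t = x then 1 else 0 := by
    intro u t x
    simp only [ha, Finsupp.finsetSum_apply, Finsupp.single_apply, Prod.mk.injEq]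
    rw [Finset.sum_eq_single t]
    · simp
    · intro b _ hb; simp [hb]
    · simp
  have hinj : Function.Injective a := by
    intro u v huv
    funext t
    have := congrArg (fun f => f (t, v t)) huv
    simp only [hval] at this
    by_contra hne
    simp [hne] at this
  set P : MvPolynomial (Fin k × ι) ℂ := ∑ u, monomial (a u) (c u) with hP
  have hcoeff : ∀ u, coeff (a u) P = c u := by
    intro u
    simp only [hP, coeff_sum, coeff_monomial]
    rw [Finset.sum_eq_single u]
    · simp
    · intro v _ hv; rw [if_neg]; intro h; exact hv (hinj h)
    · simp
  have hhom : P.IsHomogeneous k := by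
    apply IsHomogeneous.sum
    intro u _
    apply isHomogeneous_monomial
    simp [ha]
  have := hK (Fin k × ι) P M hhom (by
    intro z hz
    have := h (fun t x => z (t, x)) (fun t x => hz _)
    convert this using 2
    simp only [hP, map_sum, eval_monomial]
    apply Finset.sum_congr rfl
    intro u _
    congr 1
    rw [Finsupp.prod_fintype _ _ (by simp), Fintype.prod_prod_type]
    apply Finset.prod_congr rfl
    intro t _
    simp only [hval]
    rw [Finset.prod_eq_single (u t)]
    · simp
    · intro b _ hb; simp [Ne.symm hb]
    · simp)
  refine le_trans ?_ this
  calc ∑ u, ‖c u‖₊ ^ q = ∑ u with c u ≠ 0, ‖c u‖₊ ^ q := by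
        rw [Finset.sum_filter]
        apply Finset.sum_congr rfl
        intro u _
        by_cases hc : c u = 0 <;> simp [hc, hq0]
    _ = ∑ u with c u ≠ 0, ‖coeff (a u) P‖₊ ^ q := by simp only [hcoeff]
    _ = ∑ α ∈ (Finset.univ.filter (fun u => c u ≠ 0)).image a, ‖coeff α P‖₊ ^ q := by
        rw [Finset.sum_image hinj.injOn]
    _ ≤ _ := by
        apply Finset.sum_le_sum_of_subset
        intro α hα
        obtain ⟨u, hu, rfl⟩ := Finset.mem_image.mp hα
        rw [mem_support_iff, hcoeff]
        simpa using hu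

theorem bh_complexify {ι : Type} [Fintype ι] [DecidableEq ι] {m : ℕ} {P : MvPolynomial ι ℝ}
    (hP : P.IsHomogeneous m) {M : ℝ} (hM : ∀ x : ι → ℝ, (∀ i, |x i| ≤ 1) → |eval x P| ≤ M)
    (z : ι → ℂ) (hz : ∀ x, ‖z x‖ ≤ 1) :
    ‖eval z (map Complex.ofRealHom P)‖ ≤ 2 ^ m * M := by
  set Q := map Complex.ofRealHom P with hQ
  have hQh : Q.IsHomogeneous m := hP.map _
  have hmax := Complex.norm_le_of_forall_mem_frontier_norm_le (U := Metric.ball (0:ℂ) 1)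
    (f := fun s : ℂ => eval (fun x => z x + s * (starRingEnd ℂ) (z x)) Q) (C := 2 ^ m * M)
    Metric.isBounded_ball
    (by
      apply Differentiable.diffContOnCl
      intro s
      exact (bhDir_hasDerivAt (fun x => (starRingEnd ℂ) (z x)) z Q s).differentiableAt)
    (by
      intro s hs
      rw [frontier_ball _ one_ne_zero] at hs
      have hs' : ‖s‖ = 1 := by simpa using hs
      obtain ⟨v, hv⟩ := IsAlgClosed.exists_pow_nat_eq s (n := 2) (by norm_num)
      have hvn : ‖v‖ = 1 := by
        have : ‖v‖ ^ 2 = 1 := by rw [← norm_pow, hv, hs']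
        nlinarith [norm_nonneg v]
      have hvv : v * (starRingEnd ℂ) v = 1 := by
        rw [Complex.mul_conj, Complex.normSq_eq_norm_sq, hvn]; simp
      set r : ι → ℝ := fun x => (v * (starRingEnd ℂ) (z x)).re with hr
      have h1 : (fun x => z x + s * (starRingEnd ℂ) (z x)) = fun x => (v * 2) * ((r x : ℝ) : ℂ) := by
        funext x
        simp only [hr]
        rw [Complex.re_eq_add_conj, map_mul, Complex.conj_conj, ← hv]
        linear_combination (-z x) * hvv
      have h2 : eval (fun x => ((r x : ℝ) : ℂ)) Q = ((eval r P : ℝ) : ℂ) := by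
        rw [hQ, eval_map]
        exact (eval₂_comp_left Complex.ofRealHom (RingHom.id ℝ) r P).symm
      rw [h1, bh_scale hQh, h2, norm_mul, norm_pow, norm_mul, hvn, Complex.norm_real]
      simp only [one_mul, Complex.norm_ofNat, Real.norm_eq_abs]
      gcongr
      apply hM
      intro x
      refine (Complex.abs_re_le_norm _).trans ?_
      rw [norm_mul, hvn, RCLike.norm_conj, one_mul]
      exact hz x) (z := 0) (by
      apply subset_closure; simp)
  simpa using hmax

theorem bh_eval_le {n : ℕ} (P : MvPolynomial (Fin n) ℂ) (x : Fin n → ℂ) (hx : ∀ i, ‖x i‖ ≤ 1) :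
    ‖eval x P‖ ≤ ∑ α ∈ P.support, ‖coeff α P‖ := by
  rw [eval_eq']
  refine (norm_sum_le _ _).trans (Finset.sum_le_sum fun α _ => ?_)
  rw [norm_mul, norm_prod]
  refine mul_le_of_le_one_right (norm_nonneg _) (Finset.prod_le_one (fun _ _ => norm_nonneg _) ?_)
  intro i _
  rw [norm_pow]
  exact pow_le_one₀ (norm_nonneg _) (hx i)

theorem bh_eval_map {n : ℕ} (P : MvPolynomial (Fin n) ℝ) (x : Fin n → ℝ) :
    eval (fun i => (x i : ℂ)) (map Complex.ofRealHom P) = (eval x P : ℝ) := by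
  rw [eval_map, eval₂_eq', eval_eq']
  push_cast
  rfl

theorem bh_supp_map {n : ℕ} (P : MvPolynomial (Fin n) ℝ) :
    (map Complex.ofRealHom P).support = P.support :=
  support_map_of_injective _ Complex.ofReal_injective

theorem bh_coeff_map {n : ℕ} (P : MvPolynomial (Fin n) ℝ) (α) :
    ‖coeff α (map Complex.ofRealHom P)‖ = |coeff α P| := by
  rw [coeff_map]; simp

theorem bh_eval_le_sup {n : ℕ} (P : MvPolynomial (Fin n) ℝ) (x : Fin n → ℝ)
    (hx : ∀ i, |x i| ≤ 1) : |eval x P| ≤ supNorm P := by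
  apply le_csSup
  · refine ⟨∑ α ∈ P.support, |coeff α P|, ?_⟩
    rintro y ⟨x, hx, rfl⟩
    have := bh_eval_le (map Complex.ofRealHom P) (fun i => (x i : ℂ)) (by simpa using hx)
    rw [bh_eval_map, bh_supp_map] at this
    simp only [bh_coeff_map] at this
    simpa using this
  · exact ⟨x, hx, rfl⟩

theorem bh_sup_nonneg {n : ℕ} (P : MvPolynomial (Fin n) ℝ) : 0 ≤ supNorm P :=
  (abs_nonneg _).trans (bh_eval_le_sup P 0 (by simp))

open scoped NNReal in
theorem bh_lp_le {m : ℕ} (hm : 1 ≤ m) {K : ℝ≥0} (hK : BhP m K) {n : ℕ}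
    (P : MvPolynomial (Fin n) ℝ) (hP : P.IsHomogeneous m) :
    lpNorm (2 * m / (m + 1)) P ≤ (2 ^ m * K : ℝ) * supNorm P := by
  have hq : (0:ℝ) < 2 * m / (m + 1) := by
    have : (0:ℝ) < m := by exact_mod_cast hm
    positivity
  have h := hK (Fin n) (map Complex.ofRealHom P) ⟨2 ^ m * supNorm P, by
    have := bh_sup_nonneg P; positivity⟩ (hP.map _)
    (fun z hz => bh_complexify hP (bh_eval_le_sup P) z hz)
  rw [bh_supp_map] at h
  have h2 : ∑ α ∈ P.support, |coeff α P| ^ (2 * m / (m + 1) : ℝ) ≤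
      (K * (2 ^ m * supNorm P)) ^ (2 * m / (m + 1) : ℝ) := by
    have h3 := NNReal.coe_le_coe.2 h
    push_cast at h3
    simp only [bh_coeff_map] at h3
    exact h3
  unfold lpNorm
  have h0 : (0:ℝ) ≤ K * (2 ^ m * supNorm P) := by
    have := bh_sup_nonneg P; positivity
  calc _ ≤ ((K * (2 ^ m * supNorm P)) ^ (2 * m / (m + 1) : ℝ)) ^ (1 / (2 * m / (m + 1) : ℝ)) := by
        apply Real.rpow_le_rpow _ h2 (by positivity)
        exact Finset.sum_nonneg fun _ _ => by positivity
    _ = K * (2 ^ m * supNorm P) := by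
        rw [← Real.rpow_mul h0, mul_one_div_cancel hq.ne', Real.rpow_one]
    _ = _ := by ring

theorem bh_const_nonneg (m : ℕ) : 0 ≤ BHconst m :=
  Real.sInf_nonneg fun _ h => h.1.le

open scoped NNReal in
theorem bh_mem {m : ℕ} (hm : 1 ≤ m) {K : ℝ≥0} (hK : BhP m K) (D : ℝ) (hD : 0 < D)
    (hKD : (2 ^ m * K : ℝ) ≤ D) : D ∈ {D : ℝ | 0 < D ∧ ∀ (n : ℕ) (P : MvPolynomial (Fin n) ℝ),
    P.IsHomogeneous m → lpNorm (2 * m / (m + 1)) P ≤ D * supNorm P} :=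
  ⟨hD, fun _ P hP => (bh_lp_le hm hK P hP).trans
    (mul_le_mul_of_nonneg_right hKD (bh_sup_nonneg P))⟩

open scoped NNReal in
theorem bh_upper (k : ℕ) (hk : 1 ≤ k) : ∃ B : ℝ, 0 < B ∧ ∀ m : ℕ, k ≤ m →
    BHconst m ≤ 2 ^ m * ((2:ℝ) ^ ((m:ℝ) / k) * B * (3 * m) ^ k) := by
  have hB := bh_poly_to_multi k hk _ (bh_main k 1 le_rfl hk 1 bh_base)
  set B := ((2:ℝ≥0) ^ ((k:ℝ) / (1:ℕ)) * 1 * (3 * k) ^ 1) with hBd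
  refine ⟨B + 1, by positivity, fun m hm => ?_⟩
  have hm1 : (0:ℝ) < m := by exact_mod_cast (hk.trans hm)
  have h := bh_main m k hk hm _ hB
  refine csInf_le ⟨0, fun _ h => h.1.le⟩ (bh_mem (hk.trans hm) h _ (by positivity) ?_)
  push_cast
  gcongr
  rw [hBd]; push_cast
  linarith

theorem bh_nonempty {m : ℕ} (hm : 1 ≤ m) : {D : ℝ | 0 < D ∧ ∀ (n : ℕ) (P : MvPolynomial (Fin n) ℝ),
    P.IsHomogeneous m → lpNorm (2 * m / (m + 1)) P ≤ D * supNorm P}.Nonempty :=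
  ⟨_, bh_mem hm (bh_main m 1 le_rfl hm 1 bh_base) _ (lt_max_of_lt_right one_pos) (le_max_left _ 1)⟩

theorem bh_Q (n : ℕ) : ∃ (N : ℕ) (Q : MvPolynomial (Fin N) ℝ), Q.IsHomogeneous (2 ^ n) ∧
    (∀ x : Fin N → ℝ, (∀ i, |x i| ≤ 1) → |eval x Q| ≤ 1) ∧
    ∃ z : Fin N → ℂ, (∀ i, ‖z i‖ ≤ 1) ∧
      eval z (map Complex.ofRealHom Q) = 2 ^ (2 ^ n - 1) := by
  induction n with
  | zero =>
    refine ⟨1, X 0, isHomogeneous_X _ _, fun x hx => by simpa using hx 0, fun _ => 1, by simp,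
      by simp⟩
  | succ n ih =>
    obtain ⟨N, Q, hQ, hb, z, hz, hzQ⟩ := ih
    set d := 2 ^ n with hd
    have hd1 : 1 ≤ d := Nat.one_le_two_pow
    obtain ⟨ω, hω, hωd⟩ : ∃ ω : ℂ, ‖ω‖ ≤ 1 ∧ ω ^ d = Complex.I := by
      obtain ⟨ω, h⟩ := IsAlgClosed.exists_pow_nat_eq Complex.I (n := d) hd1
      refine ⟨ω, ?_, h⟩
      have : ‖ω‖ ^ d = 1 := by rw [← norm_pow, h, Complex.norm_I]
      exact ((pow_eq_one_iff_of_nonneg (norm_nonneg _) (by omega)).1 this).le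
    refine ⟨N + N, (rename (Fin.castAdd N) Q) ^ 2 - (rename (Fin.natAdd N) Q) ^ 2, ?_, ?_,
      Fin.append z (fun i => ω * z i), ?_, ?_⟩
    · rw [pow_succ 2 n, ← hd]
      exact (hQ.rename_isHomogeneous.pow 2).sub (hQ.rename_isHomogeneous.pow 2)
    · intro x hx
      rw [map_sub, map_pow, map_pow, eval_rename, eval_rename]
      have h1 := hb (x ∘ Fin.castAdd N) (fun i => hx _)
      have h2 := hb (x ∘ Fin.natAdd N) (fun i => hx _)
      rw [← sq_le_one_iff_abs_le_one] at h1 h2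
      rw [abs_le]
      constructor <;> nlinarith [sq_nonneg (eval (x ∘ Fin.castAdd N) Q), sq_nonneg (eval (x ∘ Fin.natAdd N) Q)]
    · intro i
      refine Fin.addCases (fun i => ?_) (fun i => ?_) i
      · simpa using hz i
      · simp only [Fin.append_right, norm_mul]
        exact mul_le_one₀ hω (norm_nonneg _) (hz i)
    · rw [map_sub, map_pow, map_pow, map_rename, map_rename, map_sub, map_pow, map_pow,
        eval_rename, eval_rename]
      have e1 : Fin.append z (fun i => ω * z i) ∘ Fin.castAdd N = z := by ext i; simp
      have e2 : Fin.append z (fun i => ω * z i) ∘ Fin.natAdd N = fun i => ω * z i := by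
        ext i; exact Fin.append_right _ _ i
      rw [e1, e2, bh_scale (hQ.map _), hzQ, hωd, mul_pow, Complex.I_sq, pow_succ 2 n, ← hd]
      have : d * 2 - 1 = (d - 1) * 2 + 1 := by omega
      rw [this, pow_succ _ ((d - 1) * 2), pow_mul]
      ring

theorem bh_coeff_le_lp {n : ℕ} {p : ℝ} (hp : 0 < p) (P : MvPolynomial (Fin n) ℝ) (α : Fin n →₀ ℕ)
    (hα : α ∈ P.support) : |coeff α P| ≤ lpNorm p P := by
  unfold lpNorm
  calc |coeff α P| = (|coeff α P| ^ p) ^ (1 / p) := by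
        rw [← Real.rpow_mul (abs_nonneg _), mul_one_div_cancel hp.ne', Real.rpow_one]
    _ ≤ _ := by
        apply Real.rpow_le_rpow (by positivity) _ (by positivity)
        exact Finset.single_le_sum (f := fun α => |coeff α P| ^ p) (fun _ _ => by positivity) hα

theorem bh_card {N m : ℕ} (P : MvPolynomial (Fin N) ℝ) (hP : P.IsHomogeneous m) :
    P.support.card ≤ (m + 1) ^ N := by
  have : P.support.card ≤ (Fintype.piFinset fun _ : Fin N => Finset.range (m + 1)).card := by
    apply Finset.card_le_card_of_injOn (fun α : Fin N →₀ ℕ => (⇑α : Fin N → ℕ))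
    · intro α hα
      have h := hP (mem_support_iff.1 hα)
      simp only [Finset.mem_coe, Fintype.mem_piFinset, Finset.mem_range]
      intro i
      have h1 : α.degree = m := by
        rw [← h, Finsupp.degree_eq_weight_one]; rfl
      have := Finsupp.le_degree i α
      omega
    · intro a _ b _ h
      exact DFunLike.coe_injective h
  simpa using this

theorem bh_lower (n : ℕ) : ∃ N : ℕ, ∀ r : ℕ, 1 ≤ r →
    (2:ℝ) ^ ((2 ^ n - 1) * r) / ((2 ^ n * r : ℕ) + 1 : ℝ) ^ N ≤ BHconst (2 ^ n * r) := by
  obtain ⟨N, Q, hQ, hb, z, hz, hzQ⟩ := bh_Q n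
  refine ⟨N, fun r hr => ?_⟩
  have hm : 1 ≤ 2 ^ n * r := Nat.mul_pos (by positivity) hr
  set m := 2 ^ n * r with hmd
  have hP : (Q ^ r).IsHomogeneous m := hQ.pow r
  have hq : (0:ℝ) < 2 * m / (m + 1) := by
    have : (0:ℝ) < m := by exact_mod_cast hm
    positivity
  apply le_csInf (bh_nonempty hm)
  rintro D ⟨hD, h⟩
  have h1 := h N (Q ^ r) hP
  have hs : supNorm (Q ^ r) ≤ 1 := by
    unfold supNorm
    refine csSup_le ⟨|eval 0 (Q ^ r)|, 0, by simp, rfl⟩ ?_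
    rintro y ⟨x, hx, rfl⟩
    rw [map_pow, abs_pow]
    exact pow_le_one₀ (abs_nonneg _) (hb x hx)
  have h2 : lpNorm (2 * m / (m + 1)) (Q ^ r) ≤ D := h1.trans (mul_le_of_le_one_right hD.le hs)
  have h3 := bh_eval_le (map Complex.ofRealHom (Q ^ r)) z hz
  rw [bh_supp_map, map_pow, map_pow, hzQ] at h3
  rw [div_le_iff₀ (by positivity)]
  calc (2:ℝ) ^ ((2 ^ n - 1) * r) = ‖((2:ℂ) ^ (2 ^ n - 1)) ^ r‖ := by
        rw [← pow_mul, norm_pow]; simp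
    _ ≤ _ := h3
    _ ≤ ∑ α ∈ (Q ^ r).support, D := by
        apply Finset.sum_le_sum
        intro α hα
        rw [← map_pow, bh_coeff_map]
        exact (bh_coeff_le_lp hq _ α hα).trans h2
    _ = D * (Q ^ r).support.card := by rw [Finset.sum_const, nsmul_eq_mul, mul_comm]
    _ ≤ _ := by
        gcongr
        exact_mod_cast bh_card _ hP

open scoped Topology in
theorem bh_T (C : ℝ) (hC : 0 < C) (k : ℕ) :
    Tendsto (fun m : ℕ => (C * (m:ℝ) ^ k) ^ ((m:ℝ)⁻¹)) atTop (nhds 1) := by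
  have hinv : Tendsto (fun m : ℕ => ((m:ℝ)⁻¹)) atTop (nhds 0) :=
    tendsto_inv_atTop_zero.comp tendsto_natCast_atTop_atTop
  have h1 : Tendsto (fun m : ℕ => C ^ ((m:ℝ)⁻¹)) atTop (nhds 1) := by
    have := (tendsto_const_nhds (x := C)).rpow hinv (Or.inl hC.ne')
    simpa using this
  have h2 : Tendsto (fun m : ℕ => ((m:ℝ) ^ ((1:ℝ) / m)) ^ k) atTop (nhds 1) := by
    simpa using (tendsto_rpow_div.comp tendsto_natCast_atTop_atTop).pow k
  have h3 := h1.mul h2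
  rw [one_mul] at h3
  refine h3.congr fun m => ?_
  rw [Real.mul_rpow hC.le (by positivity), one_div, ← Real.rpow_natCast, ← Real.rpow_natCast,
    ← Real.rpow_mul (by positivity), ← Real.rpow_mul (by positivity), mul_comm (k:ℝ)]

open scoped Topology in
theorem bh_up_tendsto (k : ℕ) (hk : 1 ≤ k) : ∃ v : ℕ → ℝ,
    Tendsto v atTop (nhds (2 * 2 ^ ((k:ℝ)⁻¹))) ∧
    ∀ᶠ m : ℕ in atTop, BHconst m ^ ((m:ℝ)⁻¹) ≤ v m := by
  obtain ⟨B, hB, h⟩ := bh_upper k hk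
  have hT := bh_T (B * 3 ^ k) (by positivity) k
  refine ⟨fun m => 2 * 2 ^ ((k:ℝ)⁻¹) * (B * 3 ^ k * (m:ℝ) ^ k) ^ ((m:ℝ)⁻¹), ?_, ?_⟩
  · simpa using hT.const_mul (2 * (2:ℝ) ^ ((k:ℝ)⁻¹))
  · filter_upwards [eventually_ge_atTop k] with m hm
    have hm0 : (m:ℝ) ≠ 0 := by
      have : m ≠ 0 := by omega
      exact_mod_cast this
    have hk0 : (k:ℝ) ≠ 0 := by
      have : k ≠ 0 := by omega
      exact_mod_cast this
    refine (Real.rpow_le_rpow (bh_const_nonneg m) (h m hm) (by positivity)).trans_eq ?_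
    have e : (2:ℝ) ^ m * ((2:ℝ) ^ ((m:ℝ) / k) * B * (3 * m) ^ k) =
        2 ^ m * ((2:ℝ) ^ ((m:ℝ) / k) * (B * 3 ^ k * (m:ℝ) ^ k)) := by
      rw [mul_pow]; ring
    rw [e, Real.mul_rpow (by positivity) (by positivity),
      Real.mul_rpow (by positivity) (by positivity), ← Real.rpow_natCast 2 m,
      ← Real.rpow_mul (by positivity), ← Real.rpow_mul (by positivity), mul_inv_cancel₀ hm0,
      Real.rpow_one]
    have e2 : (m:ℝ) / k * (m:ℝ)⁻¹ = (k:ℝ)⁻¹ := by field_simp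
    rw [e2]; ring

open scoped Topology in
theorem bh_low_tendsto (n : ℕ) : ∃ v : ℕ → ℝ,
    Tendsto v atTop (nhds (2 ^ (1 - ((2:ℝ) ^ n)⁻¹))) ∧
    ∀ r : ℕ, 1 ≤ r → v (2 ^ n * r) ≤ BHconst (2 ^ n * r) ^ (((2 ^ n * r : ℕ):ℝ)⁻¹) := by
  obtain ⟨N, h⟩ := bh_lower n
  have hT := bh_T (2 ^ N) (by positivity) N
  refine ⟨fun m => 2 ^ (1 - ((2:ℝ) ^ n)⁻¹) / (2 ^ N * (m:ℝ) ^ N) ^ ((m:ℝ)⁻¹), ?_, ?_⟩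
  · have h5 := (tendsto_const_nhds (x := (2:ℝ) ^ (1 - ((2:ℝ) ^ n)⁻¹))).div hT one_ne_zero
    rw [div_one] at h5
    exact h5
  · intro r hr
    have hm : 1 ≤ 2 ^ n * r := Nat.mul_pos (by positivity) hr
    have h1 := h r hr
    have hmr : ((2 ^ n * r : ℕ):ℝ) = 2 ^ n * r := by push_cast; rfl
    have hr0 : (0:ℝ) < r := by exact_mod_cast hr
    have hexp : ((2:ℝ) ^ ((2 ^ n - 1) * r)) ^ (((2 ^ n * r : ℕ):ℝ)⁻¹) =
        2 ^ (1 - ((2:ℝ) ^ n)⁻¹) := by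
      rw [← Real.rpow_natCast, ← Real.rpow_mul (by positivity), hmr]
      congr 1
      rw [Nat.cast_mul, Nat.cast_sub Nat.one_le_two_pow]
      push_cast
      field_simp
    set m := 2 ^ n * r
    have hm1 : (1:ℝ) ≤ m := by exact_mod_cast hm
    beta_reduce
    rw [← hexp, ← Real.div_rpow (by positivity) (by positivity)]
    refine Real.rpow_le_rpow (by positivity) (le_trans ?_ h1) (by positivity)
    rw [← mul_pow]
    gcongr
    linarith

/-- The real polynomial Bohnenblust–Hille constants satisfy
`limsup_{m→∞} D_{ℝ,m}^{1/m} = 2`. -/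
theorem real_BH_limsup_eq_two :
    limsup (fun m : ℕ => BHconst m ^ ((m : ℝ)⁻¹)) atTop = 2 := by
  have hinv : Tendsto (fun m : ℕ => ((m:ℝ)⁻¹)) atTop (nhds 0) :=
    tendsto_inv_atTop_zero.comp tendsto_natCast_atTop_atTop
  have hcob : IsCoboundedUnder (· ≤ ·) atTop (fun m : ℕ => BHconst m ^ ((m : ℝ)⁻¹)) := by
    apply IsBoundedUnder.isCoboundedUnder_le
    exact isBoundedUnder_of ⟨0, fun m => Real.rpow_nonneg (bh_const_nonneg m) _⟩
  have hbdd : IsBoundedUnder (· ≤ ·) atTop (fun m : ℕ => BHconst m ^ ((m : ℝ)⁻¹)) := by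
    obtain ⟨v, hv, hle⟩ := bh_up_tendsto 1 le_rfl
    exact hv.isBoundedUnder_le.mono_le hle
  apply le_antisymm
  · have hlim : Tendsto (fun k : ℕ => 2 * (2:ℝ) ^ ((k:ℝ)⁻¹)) atTop (nhds 2) := by
      have := ((tendsto_const_nhds (x := (2:ℝ))).rpow hinv (Or.inl two_ne_zero)).const_mul 2
      simpa using this
    refine ge_of_tendsto hlim ?_
    filter_upwards [eventually_ge_atTop 1] with k hk
    obtain ⟨v, hv, hle⟩ := bh_up_tendsto k hk
    rw [← hv.limsup_eq]
    exact limsup_le_limsup hle hcob hv.isBoundedUnder_le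
  · have hlim : Tendsto (fun n : ℕ => (2:ℝ) ^ (1 - ((2:ℝ) ^ n)⁻¹)) atTop (nhds 2) := by
      have h0 : Tendsto (fun n : ℕ => 1 - ((2:ℝ) ^ n)⁻¹) atTop (nhds (1 - 0)) :=
        tendsto_const_nhds.sub
          (tendsto_inv_atTop_zero.comp (tendsto_pow_atTop_atTop_of_one_lt one_lt_two))
      have := (tendsto_const_nhds (x := (2:ℝ))).rpow h0 (Or.inl two_ne_zero)
      simpa using this
    refine le_of_tendsto' hlim fun n => ?_
    obtain ⟨v, hv, hle⟩ := bh_low_tendsto n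
    refine le_of_forall_lt fun a ha => ?_
    obtain ⟨b, hab, hb⟩ := exists_between ha
    refine hab.trans_le (le_limsup_of_frequently_le ?_ hbdd)
    have hev := hv.eventually_const_lt hb
    rw [frequently_atTop]
    intro M
    obtain ⟨M', hM'⟩ := eventually_atTop.1 hev
    have hge : max M M' + 1 ≤ 2 ^ n * (max M M' + 1) := Nat.le_mul_of_pos_left _ (by positivity)
    refine ⟨2 ^ n * (max M M' + 1), by omega, ?_⟩
    exact (hM' _ (by omega)).le.trans (hle _ (by omega))
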